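/- Let N ∈ ℕ, m ∈ ℕ₀, β, c ∈ ℂ, c ≠ ±1, with all recurrence coefficients well-defined. Then the big -1 Jacobi polynomials factorize as Q_{2N+1+m}(x; -2N-1, β, c) = (-1)^m (x²-1)^N (x-1) · Q_m(-x; 2N+1, β, -c), where Q_n(x; α, β, c) are the monic polynomials generated by the three-term recurrence with coefficients b_n(α,β,c), u_n(α,β,c). -/

import Mathlib

open Polynomial Finset

/-- Diagonal recurrence coefficient `b_n(α,β,c)` of the monic big `-1` Jacobi polynomials. -/
noncomputable def bcoef (α β c : ℂ) (n : ℕ) : ℂ :=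
  if Even n then
    -c + (c - 1) * n / (α + β + 2 * n) + (c + 1) * (β + n + 1) / (α + β + 2 * n + 2)
  else
    c - (c - 1) * (n + 1) / (α + β + 2 * n + 2) - (c + 1) * (β + n) / (α + β + 2 * n)

/-- Subdiagonal recurrence coefficient `u_n(α,β,c)` of the monic big `-1` Jacobi polynomials. -/
noncomputable def ucoef (α β c : ℂ) (n : ℕ) : ℂ :=
  if Even n then (c - 1) ^ 2 * n * (α + β + n) / (α + β + 2 * n) ^ 2
  else (c + 1) ^ 2 * (α + n) * (β + n) / (α + β + 2 * n) ^ 2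

/-- Monic big `-1` Jacobi polynomials: `Q₀ = 1`, `Q_{n+1} = (X - b_n) Q_n - u_n Q_{n-1}`. -/
noncomputable def bigQ (α β c : ℂ) : ℕ → Polynomial ℂ
  | 0 => 1
  | 1 => X - C (bcoef α β c 0)
  | (n + 2) => (X - C (bcoef α β c (n + 1))) * bigQ α β c (n + 1)
      - C (ucoef α β c (n + 1)) * bigQ α β c n

/-!
The recurrence coefficients split as `b_n = 1 - A_n - C_n` and `u_{n+1} = A_n C_{n+1}`, so the
Darboux transformation at `x = 1` gives `Q_{n+1} = (x - 1) K_n + A_n Q_n`. The recurrence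
coefficients of the `K_n` (Chihara polynomials) are much simpler: the diagonal ones alternate
between `-c` and `c`, and the subdiagonal ones are `(1 - c²) v_n (1 - v_{n+1})` with `v_0 = 1`.
Replacing `α` by `α + 2` turns them into `(1 - c²) v_{n+2} (1 - v_{n+1})`, which yields
`(x² - 1) K_n(x; α + 2) = K_{n+2}(x; α) - (1 - c²) v_n v_{n+1} K_n(x; α)`.

For `α = -2N-1` both `v_{2N-1}` and `A_{2N}` vanish, whence `K_{2N} = (x² - 1)^N` by induction on
`N` and `Q_{2N+1} = (x² - 1)^N (x - 1)`. Finally `u_{2N+1} = 0`, so `Q_{2N+1}` divides all later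
`Q_n`, and the quotients obey the recurrence of `(-1)^m Q_m(-x; 2N+1, β, -c)`.
-/

section ThreeTerm

variable {R : Type*} [CommRing R]

/-- The monic polynomials `P_n` with `P_0 = 1`, `P_1 = X - b_0` and
`P_{n+2} = (X - b_{n+1}) P_{n+1} - u_n P_n`. The usual subdiagonal coefficient `u_{n+1}` is written
`u n` here, so that every value of `u` is used. -/
noncomputable def threeTermPoly (b u : ℕ → R) : ℕ → R[X]
  | 0 => 1
  | 1 => X - C (b 0)
  | n + 2 => (X - C (b (n + 1))) * threeTermPoly b u (n + 1) - C (u n) * threeTermPoly b u n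

variable (b u : ℕ → R)

@[simp]
lemma threeTermPoly_zero : threeTermPoly b u 0 = 1 := rfl

@[simp]
lemma threeTermPoly_one : threeTermPoly b u 1 = X - C (b 0) := rfl

lemma threeTermPoly_add_two (n : ℕ) :
    threeTermPoly b u (n + 2) =
      (X - C (b (n + 1))) * threeTermPoly b u (n + 1) - C (u n) * threeTermPoly b u n := rfl

lemma threeTermPoly_neg (n : ℕ) :
    threeTermPoly (fun k ↦ -b k) u n = (-1) ^ n * (threeTermPoly b u n).comp (-X) := by
  induction n using Nat.twoStepInduction with
  | zero => simp
  | one =>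
    simp only [threeTermPoly_one, map_neg, pow_one, sub_comp, X_comp, C_comp]
    ring
  | more n ih ih' =>
    simp only [threeTermPoly_add_two, ih, ih', sub_comp, mul_comp, X_comp, C_comp, map_neg]
    ring

lemma threeTermPoly_add_of_eq_zero {M : ℕ} (hM : u M = 0) (n : ℕ) :
    threeTermPoly b u (M + 1 + n) =
      threeTermPoly b u (M + 1) *
        threeTermPoly (fun k ↦ b (M + 1 + k)) (fun k ↦ u (M + 1 + k)) n := by
  induction n using Nat.twoStepInduction with
  | zero => simp
  | one =>
    rw [threeTermPoly_add_two, hM, threeTermPoly_one]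
    simp [mul_comm]
  | more n ih ih' =>
    rw [← add_assoc, threeTermPoly_add_two, threeTermPoly_add_two, add_assoc (M + 1) n 1, ih, ih']
    ring

lemma threeTermPoly_darboux (r : R) (p q : ℕ → R) (hq : q 0 = 0) (n : ℕ) :
    threeTermPoly (fun k ↦ r - p k - q k) (fun k ↦ p k * q (k + 1)) (n + 1) =
      (X - C r) *
          threeTermPoly (fun k ↦ r - p k - q (k + 1)) (fun k ↦ p (k + 1) * q (k + 1)) n +
        C (p n) * threeTermPoly (fun k ↦ r - p k - q k) (fun k ↦ p k * q (k + 1)) n := by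
  set Q := threeTermPoly (fun k ↦ r - p k - q k) (fun k ↦ p k * q (k + 1)) with hQ
  set K := threeTermPoly (fun k ↦ r - p k - q (k + 1)) (fun k ↦ p (k + 1) * q (k + 1)) with hK
  suffices Q (n + 1) = (X - C r) * K n + C (p n) * Q n ∧
      Q (n + 1) = K (n + 1) - C (q (n + 1)) * K n from this.1
  induction n with
  | zero =>
    simp only [hQ, hK, zero_add, threeTermPoly_zero, threeTermPoly_one, hq, map_sub, map_zero]
    constructor <;> ring
  | succ n ih =>
    obtain ⟨raise, lower⟩ := ih
    have Q_rec := threeTermPoly_add_two (fun k ↦ r - p k - q k) (fun k ↦ p k * q (k + 1)) n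
    have K_rec := threeTermPoly_add_two (fun k ↦ r - p k - q (k + 1))
      (fun k ↦ p (k + 1) * q (k + 1)) n
    simp only [← hQ, ← hK, map_sub, map_mul] at Q_rec K_rec
    have raise' : Q (n + 2) = (X - C r) * K (n + 1) + C (p (n + 1)) * Q (n + 1) := by
      linear_combination Q_rec + C (q (n + 1)) * raise + (X - C r) * lower
    exact ⟨raise', by linear_combination raise' + C (p (n + 1)) * lower - K_rec⟩

lemma quadratic_mul_threeTermPoly {b : ℕ → R} (hb : ∀ n, b (n + 2) = b n) (κ : R)
    {v : ℕ → R} (hv : v 0 = 1) (n : ℕ) :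
    ((X - C (b 0)) * (X - C (b 1)) - C κ) *
        threeTermPoly b (fun k ↦ κ * (v (k + 2) * (1 - v (k + 1)))) n =
      threeTermPoly b (fun k ↦ κ * (v k * (1 - v (k + 1)))) (n + 2) -
        C (κ * (v n * v (n + 1))) * threeTermPoly b (fun k ↦ κ * (v k * (1 - v (k + 1)))) n := by
  set P := threeTermPoly b (fun k ↦ κ * (v k * (1 - v (k + 1))))
  have P_rec (k : ℕ) :
      P (k + 2) = (X - C (b (k + 1))) * P (k + 1) - C (κ * (v k * (1 - v (k + 1)))) * P k :=
    threeTermPoly_add_two ..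
  have P_zero : P 0 = 1 := rfl
  have P_one : P 1 = X - C (b 0) := rfl
  induction n using Nat.twoStepInduction with
  | zero =>
    simp only [P_rec, P_zero, P_one, threeTermPoly_zero, hv, map_mul, map_sub, map_one]
    ring
  | one =>
    rw [P_rec 1, P_rec 0, P_one, P_zero, threeTermPoly_one, hb 0]
    simp only [hv, map_mul, map_sub, map_one]
    ring
  | more n ih ih' =>
    have P_rec' := P_rec (n + 2)
    rw [hb] at P_rec'
    rw [threeTermPoly_add_two]
    simp only [map_mul, map_sub, map_one] at ih ih' P_rec P_rec' ⊢
    linear_combination (X - C (b (n + 1))) * ih' -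
      C κ * C (v (n + 2)) * (1 - C (v (n + 1))) * ih - P_rec' +
      C κ * C (v (n + 1)) * C (v (n + 2)) * P_rec n

end ThreeTerm

lemma bigQ_eq_threeTermPoly (α β c : ℂ) (n : ℕ) :
    bigQ α β c n = threeTermPoly (bcoef α β c) (fun k ↦ ucoef α β c (k + 1)) n := by
  induction n using Nat.twoStepInduction with
  | zero => rfl
  | one => rfl
  | more n ih ih' => rw [bigQ, threeTermPoly_add_two, ih, ih']

/-- The coefficient `A_n` in the splitting `b_n = 1 - A_n - C_n`, `u_{n+1} = A_n C_{n+1}` of the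
recurrence coefficients of the big `-1` Jacobi polynomials. -/
noncomputable def Acoef (α β c : ℂ) (n : ℕ) : ℂ :=
  if Even n then (1 + c) * (α + n + 1) / (α + β + 2 * n + 2)
  else (1 - c) * (α + β + n + 1) / (α + β + 2 * n + 2)

/-- The coefficient `C_n` in the splitting `b_n = 1 - A_n - C_n`, `u_{n+1} = A_n C_{n+1}` of the
recurrence coefficients of the big `-1` Jacobi polynomials. -/
noncomputable def Ccoef (α β c : ℂ) (n : ℕ) : ℂ :=
  if Even n then (1 - c) * n / (α + β + 2 * n) else (1 + c) * (β + n) / (α + β + 2 * n)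

/-- The parameters `v_n` of the chain sequence `v_n (1 - v_{n+1})` which, multiplied by `1 - c ^ 2`,
gives the subdiagonal recurrence coefficients of the Chihara polynomials. -/
noncomputable def chainCoef (α β : ℂ) (n : ℕ) : ℂ :=
  if Even n then (α + β + n + 2) / (α + β + 2 * n + 2) else (α + n + 2) / (α + β + 2 * n + 2)

/-- The monic Chihara polynomials `K_n`, which are the Darboux transforms at `1` of the big `-1`
Jacobi polynomials with the same parameters. -/
noncomputable def chihara (α β c : ℂ) : ℕ → ℂ[X] :=
  threeTermPoly (fun n ↦ if Even n then -c else c)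
    (fun n ↦ (1 - c ^ 2) * (chainCoef α β n * (1 - chainCoef α β (n + 1))))

lemma ucoef_succ (α β c : ℂ) (n : ℕ) :
    ucoef α β c (n + 1) = Acoef α β c n * Ccoef α β c (n + 1) := by
  by_cases hn : Even n <;>
    simp only [ucoef, Acoef, Ccoef, hn, Nat.even_add_one, not_true, not_false_eq_true, if_true,
      if_false, Nat.cast_add, Nat.cast_one, div_mul_div_comm] <;>
    congr 1 <;> ring

section WellDefined

variable {α β : ℂ} (hden : ∀ n : ℕ, α + β + 2 * n + 2 ≠ 0)
include hden

lemma bcoef_eq_one_sub (c : ℂ) (n : ℕ) :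
    bcoef α β c n = 1 - Acoef α β c n - Ccoef α β c n := by
  have hcancel := mul_inv_cancel₀ (hden n)
  by_cases hn : Even n <;> simp only [bcoef, Acoef, Ccoef, hn, if_true, if_false]
  · linear_combination (1 + c) * hcancel
  · linear_combination (1 - c) * hcancel

lemma one_sub_Acoef_sub_Ccoef_succ (c : ℂ) (n : ℕ) :
    1 - Acoef α β c n - Ccoef α β c (n + 1) = if Even n then -c else c := by
  have hcancel := mul_inv_cancel₀ (hden n)
  have hshift : α + β + 2 * ((n : ℂ) + 1) = α + β + 2 * n + 2 := by ring
  by_cases hn : Even n <;>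
    simp only [Acoef, Ccoef, hn, Nat.even_add_one, not_true, not_false_eq_true, if_true, if_false,
      Nat.cast_add, Nat.cast_one, hshift]
  · linear_combination -(1 + c) * hcancel
  · linear_combination -(1 - c) * hcancel

lemma one_sub_chainCoef (n : ℕ) :
    1 - chainCoef α β n = (if Even n then (n : ℂ) else β + n) / (α + β + 2 * n + 2) := by
  have hcancel := mul_inv_cancel₀ (hden n)
  by_cases hn : Even n <;> simp only [chainCoef, hn, if_true, if_false] <;>
    linear_combination -hcancel

lemma Acoef_succ_mul_Ccoef_succ (c : ℂ) (n : ℕ) :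
    Acoef α β c (n + 1) * Ccoef α β c (n + 1) =
      (1 - c ^ 2) * (chainCoef α β n * (1 - chainCoef α β (n + 1))) := by
  rw [one_sub_chainCoef hden]
  by_cases hn : Even n <;>
    simp only [Acoef, Ccoef, chainCoef, hn, Nat.even_add_one, not_true, not_false_eq_true, if_true,
      if_false, Nat.cast_add, Nat.cast_one, div_mul_div_comm] <;>
    rw [mul_div_assoc'] <;>
    congr 1 <;> ring

lemma bigQ_succ (c : ℂ) (n : ℕ) :
    bigQ α β c (n + 1) =
      (X - 1) * chihara α β c n + C (Acoef α β c n) * bigQ α β c n := by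
  have darboux := threeTermPoly_darboux 1 (Acoef α β c) (Ccoef α β c) (by simp [Ccoef]) n
  simp only [← bcoef_eq_one_sub hden, one_sub_Acoef_sub_Ccoef_succ hden, ← ucoef_succ,
    Acoef_succ_mul_Ccoef_succ hden, ← bigQ_eq_threeTermPoly, map_one] at darboux
  exact darboux

lemma denom_add_two_ne_zero (n : ℕ) : α + 2 + β + 2 * n + 2 ≠ 0 := by
  convert hden (n + 1) using 1
  push_cast
  ring

lemma chainCoef_add_two_mul (n : ℕ) :
    chainCoef (α + 2) β n * (1 - chainCoef (α + 2) β (n + 1)) =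
      chainCoef α β (n + 2) * (1 - chainCoef α β (n + 1)) := by
  rw [one_sub_chainCoef hden, one_sub_chainCoef (denom_add_two_ne_zero hden)]
  by_cases hn : Even n <;>
    simp only [chainCoef, hn, Nat.even_add_one, not_true, not_false_eq_true, if_true, if_false,
      Nat.cast_add, Nat.cast_one, Nat.cast_ofNat, div_mul_div_comm] <;>
    congr 1 <;> ring

lemma sq_sub_one_mul_chihara (c : ℂ) (n : ℕ) :
    (X ^ 2 - 1) * chihara (α + 2) β c n =
      chihara α β c (n + 2) -
        C ((1 - c ^ 2) * (chainCoef α β n * chainCoef α β (n + 1))) * chihara α β c n := by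
  have chain_zero : chainCoef α β 0 = 1 := by
    simpa [chainCoef] using div_self (by simpa using hden 0)
  have quadratic : (X - C (-c)) * (X - C c) - C (1 - c ^ 2) = X ^ 2 - 1 := by
    simp only [map_neg, map_sub, map_pow, map_one]
    ring
  have shifted_coef : (fun k ↦ (1 - c ^ 2) *
      (chainCoef (α + 2) β k * (1 - chainCoef (α + 2) β (k + 1)))) =
      fun k ↦ (1 - c ^ 2) * (chainCoef α β (k + 2) * (1 - chainCoef α β (k + 1))) := by
    simp only [chainCoef_add_two_mul hden]
  rw [chihara, chihara, shifted_coef, ← quadratic]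
  exact quadratic_mul_threeTermPoly (b := fun n ↦ if Even n then -c else c)
    (by simp [Nat.even_add]) (1 - c ^ 2) chain_zero n

end WellDefined

section NegativeOdd

variable {N : ℕ} {β : ℂ} (hden : ∀ n : ℕ, -2 * (N : ℂ) - 1 + β + 2 * n + 2 ≠ 0)
include hden

lemma chihara_neg_odd (c : ℂ) : chihara (-2 * (N : ℂ) - 1) β c (2 * N) = (X ^ 2 - 1) ^ N := by
  induction N with
  | zero => rfl
  | succ N ih =>
    have hα : -2 * ((N + 1 : ℕ) : ℂ) - 1 + 2 = -2 * N - 1 := by push_cast; ring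
    have chain_eq_zero : chainCoef (-2 * ((N + 1 : ℕ) : ℂ) - 1) β (2 * N + 1) = 0 := by
      have numerator_eq_zero : -2 * ((N + 1 : ℕ) : ℂ) - 1 + (2 * N + 1 : ℕ) + 2 = 0 := by
        push_cast; ring
      rw [chainCoef, if_neg (by simp [parity_simps]), numerator_eq_zero, zero_div]
    have shift := sq_sub_one_mul_chihara hden c (2 * N)
    have hden' := denom_add_two_ne_zero hden
    rw [hα] at shift hden'
    rw [ih hden', chain_eq_zero, mul_zero, mul_zero, map_zero, zero_mul, sub_zero] at shift
    rw [mul_add_one, ← shift, ← pow_succ']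

lemma bigQ_neg_odd (c : ℂ) :
    bigQ (-2 * (N : ℂ) - 1) β c (2 * N + 1) = (X ^ 2 - 1) ^ N * (X - 1) := by
  have A_eq_zero : Acoef (-2 * (N : ℂ) - 1) β c (2 * N) = 0 := by
    rw [Acoef, if_pos (even_two_mul N)]
    push_cast
    ring
  rw [bigQ_succ hden, chihara_neg_odd hden, A_eq_zero, map_zero, zero_mul, add_zero, mul_comm]

lemma bcoef_neg_odd_add (c : ℂ) (k : ℕ) :
    bcoef (-2 * (N : ℂ) - 1) β c (2 * N + 1 + k) = -bcoef (2 * (N : ℂ) + 1) β (-c) k := by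
  have hdenom : -2 * (N : ℂ) - 1 + β + 2 * (2 * N + 1 + k) = 2 * N + 1 + β + 2 * k := by ring
  have hcancel : (2 * N + 1 + β + 2 * k) * (2 * N + 1 + β + 2 * k : ℂ)⁻¹ = 1 := by
    refine mul_inv_cancel₀ ?_
    convert hden (2 * N + k) using 1
    push_cast
    ring
  have hcancel' : (2 * N + 1 + β + 2 * k + 2) * (2 * N + 1 + β + 2 * k + 2 : ℂ)⁻¹ = 1 := by
    refine mul_inv_cancel₀ ?_
    convert hden (2 * N + 1 + k) using 1
    push_cast
    ring
  by_cases hk : Even k <;>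
    simp only [bcoef, hk, Nat.even_add, Nat.even_add_one, even_two_mul, not_true, if_true, if_false,
      iff_true, Nat.cast_add, Nat.cast_mul, Nat.cast_ofNat, Nat.cast_one, hdenom]
  · linear_combination -(c - 1) * hcancel' - (c + 1) * hcancel
  · linear_combination (c - 1) * hcancel + (c + 1) * hcancel'

end NegativeOdd

lemma ucoef_neg_odd_add (N : ℕ) (β c : ℂ) (k : ℕ) :
    ucoef (-2 * (N : ℂ) - 1) β c (2 * N + 1 + k) = ucoef (2 * (N : ℂ) + 1) β (-c) k := by
  by_cases hk : Even k <;>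
    simp only [ucoef, hk, Nat.even_add, Nat.even_add_one, even_two_mul, not_true, if_true, if_false,
      iff_true, Nat.cast_add, Nat.cast_mul, Nat.cast_ofNat, Nat.cast_one] <;>
    congr 1 <;> ring

/-- Factorization of the big `-1` Jacobi polynomials for `α = -2N-1`:
`Q_{2N+1+m}(x; -2N-1, β, c) = (-1)^m (x²-1)^N (x-1) Q_m(-x; 2N+1, β, -c)`. -/
theorem bigQ_factorization_alpha (N : ℕ) (hN : 1 ≤ N) (m : ℕ) (β c : ℂ)
    (hc1 : c ≠ 1) (hc2 : c ≠ -1)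
    (hden : ∀ n : ℕ, β - (2 * (N : ℂ) + 1) + 2 * n ≠ 0) :
    bigQ (-2 * (N : ℂ) - 1) β c (2 * N + 1 + m)
      = (-1) ^ m * (X ^ 2 - 1) ^ N * (X - 1)
        * (bigQ (2 * (N : ℂ) + 1) β (-c) m).comp (-X) := by
  have hden' (n : ℕ) : -2 * (N : ℂ) - 1 + β + 2 * n + 2 ≠ 0 := by
    convert hden (n + 1) using 1
    push_cast
    ring
  have u_eq_zero : ucoef (-2 * (N : ℂ) - 1) β c (2 * N + 1) = 0 := by
    simp [ucoef]
  have tail := threeTermPoly_add_of_eq_zero (bcoef (-2 * (N : ℂ) - 1) β c)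
    (fun k ↦ ucoef (-2 * (N : ℂ) - 1) β c (k + 1)) u_eq_zero m
  simp only [add_assoc (2 * N + 1), bcoef_neg_odd_add hden', ucoef_neg_odd_add, threeTermPoly_neg,
    ← bigQ_eq_threeTermPoly, bigQ_neg_odd hden'] at tail
  rw [tail]
  ring
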